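/- arXiv:1006.1561 — 2 statements merged into one kernel-verified Lean document; each statement's English description precedes it below -/
import Mathlib

section
/- Let f : ℝ → ℝ be differentiable on an open interval I containing [0,∞), let 0 ≤ a < b, suppose f' is integrable on [a,b], let p > 1 and q = p/(p-1), suppose |f'|^q is convex on [a,b], and suppose |f'| is monotone decreasing on [a,b]. Then |f((a+b)/2) - (1/(b-a))·∫_a^b f(u) du| ≤ ((b-a)/2)·|f'(a)|. -/
open MeasureTheory Set intervalIntegral

/-!
The mean value of `|x - u|` over `u ∈ [a, b]` is `((x - a) ^ 2 + (b - x) ^ 2) / (2 * (b - a))`, so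
averaging the Lipschitz estimate `‖f x - f u‖ ≤ K * |x - u|` over `u` gives Ostrowski's inequality;
at the midpoint its right-hand side is `(b - a) / 4 * K`. If `‖f'‖` is decreasing on `[a, b]`, the
mean value inequality provides the Lipschitz constant `K = ‖f' a‖`.
-/

open scoped NNReal

theorem integral_abs_sub_of_mem_Icc {a b x : ℝ} (hx : x ∈ Icc a b) :
    ∫ u in a..b, |x - u| = ((x - a) ^ 2 + (b - x) ^ 2) / 2 := by
  have integrable (c d : ℝ) : IntervalIntegrable (fun u ↦ |x - u|) volume c d :=
    Continuous.intervalIntegrable (by fun_prop) c d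
  have integral_uIoc (c : ℝ) : ∫ u in uIoc x c, |x - u| = (c - x) ^ 2 / 2 := by
    simpa [abs_sub_comm x, one_add_one_eq_two] using
      integral_pow_abs_sub_uIoc (a := x) (b := c) (n := 1)
  calc
    ∫ u in a..b, |x - u| = (∫ u in a..x, |x - u|) + ∫ u in x..b, |x - u| :=
      (integral_add_adjacent_intervals (integrable a x) (integrable x b)).symm
    _ = (∫ u in uIoc x a, |x - u|) + ∫ u in uIoc x b, |x - u| := by
      rw [integral_of_le hx.1, integral_of_le hx.2, uIoc_of_ge hx.1, uIoc_of_le hx.2]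
    _ = ((x - a) ^ 2 + (b - x) ^ 2) / 2 := by
      rw [integral_uIoc, integral_uIoc]
      ring

section Ostrowski

variable {E : Type*} [NormedAddCommGroup E] [NormedSpace ℝ E] [CompleteSpace E]
  {f : ℝ → E} {a b : ℝ}

theorem sub_interval_average_eq (hab : a ≠ b) (hf : IntervalIntegrable f volume a b) (c : E) :
    c - ⨍ u in a..b, f u = (b - a)⁻¹ • ∫ u in a..b, (c - f u) := by
  rw [interval_average_eq, integral_sub intervalIntegrable_const hf,
    intervalIntegral.integral_const, smul_sub, inv_smul_smul₀ (sub_ne_zero.2 hab.symm)]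

theorem norm_sub_interval_average_le_of_lipschitzOnWith {K : ℝ≥0} {x : ℝ} (hab : a < b)
    (hf : LipschitzOnWith K f (Icc a b)) (hx : x ∈ Icc a b) :
    ‖f x - ⨍ u in a..b, f u‖ ≤ ((x - a) ^ 2 + (b - x) ^ 2) / (2 * (b - a)) * K := by
  have length_pos : 0 < b - a := sub_pos.2 hab
  have f_integrable : IntervalIntegrable f volume a b :=
    hf.continuousOn.intervalIntegrable_of_Icc hab.le
  have lipschitz_bound : ∀ u ∈ Ioc a b, ‖f x - f u‖ ≤ K * |x - u| := fun u hu ↦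
    hf.norm_sub_le hx (Ioc_subset_Icc_self hu)
  calc
    ‖f x - ⨍ u in a..b, f u‖ = (b - a)⁻¹ * ‖∫ u in a..b, (f x - f u)‖ := by
      rw [sub_interval_average_eq hab.ne f_integrable, norm_smul,
        Real.norm_of_nonneg (inv_nonneg.2 length_pos.le)]
    _ ≤ (b - a)⁻¹ * ∫ u in a..b, K * |x - u| := by
      gcongr
      exact norm_integral_le_of_norm_le hab.le (.of_forall lipschitz_bound)
        (Continuous.intervalIntegrable (by fun_prop) a b)
    _ = ((x - a) ^ 2 + (b - x) ^ 2) / (2 * (b - a)) * K := by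
      rw [intervalIntegral.integral_const_mul, integral_abs_sub_of_mem_Icc hx]
      field_simp

theorem norm_midpoint_sub_interval_average_le_of_lipschitzOnWith {K : ℝ≥0} (hab : a < b)
    (hf : LipschitzOnWith K f (Icc a b)) :
    ‖f ((a + b) / 2) - ⨍ u in a..b, f u‖ ≤ (b - a) / 4 * K := by
  have midpoint_mem : (a + b) / 2 ∈ Icc a b := ⟨by linarith, by linarith⟩
  have constant_eq :
      (((a + b) / 2 - a) ^ 2 + (b - (a + b) / 2) ^ 2) / (2 * (b - a)) = (b - a) / 4 := by
    have length_ne_zero : b - a ≠ 0 := (sub_pos.2 hab).ne'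
    field_simp
    ring
  exact constant_eq ▸ norm_sub_interval_average_le_of_lipschitzOnWith hab hf midpoint_mem

theorem stmt_9_general {f' : ℝ → E} (hab : a < b)
    (hf : ∀ x ∈ Icc a b, HasDerivWithinAt f (f' x) (Icc a b) x)
    (hmono : AntitoneOn (fun x ↦ ‖f' x‖) (Icc a b)) :
    ‖f ((a + b) / 2) - ⨍ u in a..b, f u‖ ≤ (b - a) / 4 * ‖f' a‖ := by
  have lipschitz : LipschitzOnWith ‖f' a‖₊ f (Icc a b) :=
    (convex_Icc a b).lipschitzOnWith_of_nnnorm_hasDerivWithin_le hf fun _ hx ↦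
      hmono (left_mem_Icc.2 hab.le) hx hx.1
  exact norm_midpoint_sub_interval_average_le_of_lipschitzOnWith hab lipschitz

end Ostrowski

/-- Remark 2.4 (E): `|f'|^q` convex on `[a,b]` and `|f'|` decreasing. -/
theorem stmt_9 (f : ℝ → ℝ) (I : Set ℝ) (hIopen : IsOpen I) (hIconn : I.OrdConnected)
    (hIci : Set.Ici (0:ℝ) ⊆ I) (hf : ∀ y ∈ I, DifferentiableAt ℝ f y)
    (a b : ℝ) (ha : 0 ≤ a) (hab : a < b)
    (hint : IntervalIntegrable (deriv f) volume a b)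
    (p q : ℝ) (hp : 1 < p) (hq : q = p / (p - 1))
    (hconv : ConvexOn ℝ (Set.Icc a b) (fun u => |deriv f u| ^ q))
    (hmono : AntitoneOn (fun u => |deriv f u|) (Set.Icc a b)) :
    |f ((a + b) / 2) - (1 / (b - a)) * ∫ u in a..b, f u| ≤
      ((b - a) / 2) * |deriv f a| := by
  have hderiv : ∀ x ∈ Icc a b, HasDerivWithinAt f (deriv f x) (Icc a b) x := fun x hx ↦
    (hf x (hIci (ha.trans hx.1))).hasDerivAt.hasDerivWithinAt
  rw [one_div, ← smul_eq_mul (b - a)⁻¹, ← interval_average_eq]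
  exact (stmt_9_general hab hderiv hmono).trans <|
    mul_le_mul_of_nonneg_right (by linarith) (abs_nonneg _)
end

section
/- Let f : ℝ → ℝ be differentiable on an open interval I containing [0,∞), let 0 ≤ a < b, suppose f' is integrable on [a,b], let q ∈ [1,∞), and suppose |f'|^q is m-convex on [0,∞) for some fixed m ∈ (0,1]. Then for every x ∈ [a,b], |f(x) - (1/(b-a))·∫_a^b f(u) du| ≤ (b-a)·(1/2)^{1-1/q} · { ((b-x)/(b-a))^{2(1-1/q)} · [ (1/3)·((b-x)/(b-a))³·|f'(a)|^q + m·((b-x)²·(b-3a+2x))/(6·(b-a)³)·|f'(b/m)|^q ]^{1/q} + ((x-a)/(b-a))^{2(1-1/q)} · [ ( 1/6 + ((b-x)²·(3a-b-2x))/(6·(b-a)³) )·|f'(a)|^q + m·(1/3)·((x-a)/(b-a))³·|f'(b/m)|^q ]^{1/q} }. -/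
open MeasureTheory Set intervalIntegral

/-!
Integrating by parts on `[a, x]` and on `[x, b]` writes `f x` minus the mean of `f` as the integral
of `f'` against the Peano kernel, equal to `(u - a) / (b - a)` left of `x` and to
`(u - b) / (b - a)` right of `x`. On each piece the weighted power-mean inequality reduces the
estimate to the mass of the kernel and to its integral against a bound for `|f'| ^ q`.
Since `b = m * (b / m)`, `m`-convexity bounds `|f'| ^ q` on `[a, b]` by the affine function with
values `|f' a| ^ q` at `a` and `m * |f' (b / m)| ^ q` at `b`, and both integrals become polynomials.
-/

/-- The function `g` is `m`-convex on `s`: Toader's weakening of convexity, in which the second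
endpoint and the value there are both scaled by `m`; `m = 1` is the usual convexity inequality. -/
def MConvexOn (m : ℝ) (s : Set ℝ) (g : ℝ → ℝ) : Prop :=
  ∀ u ∈ s, ∀ v ∈ s, ∀ t ∈ Icc (0 : ℝ) 1,
    g (t * u + m * (1 - t) * v) ≤ t * g u + m * (1 - t) * g v

theorem MConvexOn.le_chord {m a b u : ℝ} {s : Set ℝ} {g : ℝ → ℝ} (hg : MConvexOn m s g)
    (hm : m ≠ 0) (ha : a ∈ s) (hb : b / m ∈ s) (hab : a < b) (hu : u ∈ Icc a b) :
    g u ≤ (b - u) / (b - a) * g a + (u - a) / (b - a) * (m * g (b / m)) := by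
  have hD : 0 < b - a := sub_pos.2 hab
  have ht : (b - u) / (b - a) ∈ Icc (0 : ℝ) 1 :=
    ⟨div_nonneg (sub_nonneg.2 hu.2) hD.le, (div_le_one hD).2 (sub_le_sub_left hu.1 b)⟩
  have hpoint : (b - u) / (b - a) * a + m * (1 - (b - u) / (b - a)) * (b / m) = u := by
    field_simp
    ring
  have hweight : 1 - (b - u) / (b - a) = (u - a) / (b - a) := by
    field_simp
    ring
  have hconv := hg a ha (b / m) hb _ ht
  rw [hpoint, hweight] at hconv
  linarith

theorem mul_le_rpow_mul_rpow_of_rpow_le {w y B q : ℝ} (hq : 1 ≤ q) (hw : 0 ≤ w) (hy : 0 ≤ y)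
    (hyB : y ^ q ≤ B) : w * y ≤ w ^ (1 - 1 / q) * (w * B) ^ (1 / q) := by
  have hq0 : 0 < q := one_pos.trans_le hq
  have hp : 0 ≤ 1 / q := by positivity
  have hp' : 0 ≤ 1 - 1 / q := sub_nonneg.2 ((div_le_one hq0).2 hq)
  have hB : 0 ≤ B := (Real.rpow_nonneg hy q).trans hyB
  calc w * y = w ^ (1 - 1 / q + 1 / q) * (y ^ q) ^ (1 / q) := by
        rw [sub_add_cancel, Real.rpow_one, one_div, Real.rpow_rpow_inv hy hq0.ne']
    _ ≤ w ^ (1 - 1 / q + 1 / q) * B ^ (1 / q) := by gcongr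
    _ = w ^ (1 - 1 / q) * (w * B) ^ (1 / q) := by
        rw [Real.rpow_add_of_nonneg hw hp' hp, Real.mul_rpow hw hB, mul_assoc]

theorem mul_rpow_one_sub_mul_mul_rpow {d s j : ℝ} (p : ℝ) (hd : 0 < d) (hs : 0 ≤ s)
    (hj : 0 ≤ j) :
    (d * (1 / 2 * s ^ 2)) ^ (1 - p) * (d * j) ^ p =
      d * (1 / 2 : ℝ) ^ (1 - p) * (s ^ (2 * (1 - p)) * j ^ p) := by
  have hd_pow : d ^ (1 - p) * d ^ p = d := by
    rw [← Real.rpow_add hd, sub_add_cancel, Real.rpow_one]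
  rw [Real.mul_rpow hd.le (by positivity), Real.mul_rpow hd.le hj,
    Real.mul_rpow (by positivity) (by positivity), Real.rpow_mul hs, Real.rpow_two]
  linear_combination ((1 / 2 : ℝ) ^ (1 - p) * (s ^ 2) ^ (1 - p) * j ^ p) * hd_pow

theorem integral_sub_const_pow (a x : ℝ) (n : ℕ) :
    ∫ u in a..x, (u - a) ^ n = (x - a) ^ (n + 1) / (n + 1) := by
  simp [integral_comp_sub_right (fun v ↦ v ^ n) a]

theorem integral_left_peano_kernel {a b : ℝ} (x : ℝ) (hab : a ≠ b) :
    ∫ u in a..x, (u - a) / (b - a) = (b - a) * (1 / 2 * ((x - a) / (b - a)) ^ 2) := by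
  have hD : b - a ≠ 0 := sub_ne_zero.2 hab.symm
  have hmass := integral_sub_const_pow a x 1
  simp only [pow_one] at hmass
  rw [intervalIntegral.integral_div, hmass]
  field_simp
  norm_num

theorem integral_left_peano_kernel_mul_chord {a b : ℝ} (x A B : ℝ) (hab : a ≠ b) :
    ∫ u in a..x, (u - a) / (b - a) * ((b - u) / (b - a) * A + (u - a) / (b - a) * B) =
      (b - a) * (((x - a) ^ 2 * (3 * b - a - 2 * x)) / (6 * (b - a) ^ 3) * A +
        1 / 3 * ((x - a) / (b - a)) ^ 3 * B) := by
  have hD : b - a ≠ 0 := sub_ne_zero.2 hab.symm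
  have hexpand (u : ℝ) : (u - a) / (b - a) * ((b - u) / (b - a) * A + (u - a) / (b - a) * B) =
      A / (b - a) * (u - a) ^ 1 + (B - A) / (b - a) ^ 2 * (u - a) ^ 2 := by
    field_simp
    ring
  simp only [hexpand]
  rw [integral_add (Continuous.intervalIntegrable (by fun_prop) _ _)
      (Continuous.intervalIntegrable (by fun_prop) _ _),
    intervalIntegral.integral_const_mul, intervalIntegral.integral_const_mul,
    integral_sub_const_pow, integral_sub_const_pow]
  push_cast
  field_simp
  ring

section PeanoKernel

variable {E : Type*} [NormedAddCommGroup E] [NormedSpace ℝ E]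

theorem norm_integral_smul_le_rpow_mul_rpow {α : Type*} [MeasurableSpace α] {μ : Measure α}
    {w B : α → ℝ} {g : α → E} {q : ℝ} (hq : 1 ≤ q) (hw : Integrable w μ)
    (hwB : Integrable (fun u ↦ w u * B u) μ) (hw0 : 0 ≤ᵐ[μ] w)
    (hgB : ∀ᵐ u ∂μ, ‖g u‖ ^ q ≤ B u) :
    ‖∫ u, w u • g u ∂μ‖ ≤ (∫ u, w u ∂μ) ^ (1 - 1 / q) * (∫ u, w u * B u ∂μ) ^ (1 / q) := by
  have hq0 : 0 < q := one_pos.trans_le hq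
  have hp : 0 ≤ 1 / q := by positivity
  have hp' : 0 ≤ 1 - 1 / q := sub_nonneg.2 ((div_le_one hq0).2 hq)
  have hwB0 : 0 ≤ᵐ[μ] fun u ↦ w u * B u := by
    filter_upwards [hw0, hgB] with u hwu hgu
    exact mul_nonneg hwu ((by positivity : 0 ≤ ‖g u‖ ^ q).trans hgu)
  have hW : 0 ≤ ∫ u, w u ∂μ := integral_nonneg_of_ae hw0
  have hJ : 0 ≤ ∫ u, w u * B u ∂μ := integral_nonneg_of_ae hwB0
  have hpointwise : ∀ᵐ u ∂μ, ‖w u • g u‖ₑ ≤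
      ENNReal.ofReal (w u) ^ (1 - 1 / q) * ENNReal.ofReal (w u * B u) ^ (1 / q) := by
    filter_upwards [hw0, hwB0, hgB] with u hwu hwBu hgu
    rw [ENNReal.ofReal_rpow_of_nonneg hwu hp', ENNReal.ofReal_rpow_of_nonneg hwBu hp,
      ← ENNReal.ofReal_mul (Real.rpow_nonneg hwu _), ← ofReal_norm, norm_smul,
      Real.norm_of_nonneg hwu]
    exact ENNReal.ofReal_le_ofReal
      (mul_le_rpow_mul_rpow_of_rpow_le hq hwu (norm_nonneg _) hgu)
  rw [← ENNReal.ofReal_le_ofReal_iff (by positivity), ofReal_norm]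
  calc ‖∫ u, w u • g u ∂μ‖ₑ ≤ ∫⁻ u, ‖w u • g u‖ₑ ∂μ := enorm_integral_le_lintegral_enorm _
    _ ≤ ∫⁻ u, ENNReal.ofReal (w u) ^ (1 - 1 / q) * ENNReal.ofReal (w u * B u) ^ (1 / q) ∂μ :=
        lintegral_mono_ae hpointwise
    _ ≤ (∫⁻ u, ENNReal.ofReal (w u) ∂μ) ^ (1 - 1 / q) *
          (∫⁻ u, ENNReal.ofReal (w u * B u) ∂μ) ^ (1 / q) :=
        ENNReal.lintegral_mul_norm_pow_le hw.aemeasurable.ennreal_ofReal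
          hwB.aemeasurable.ennreal_ofReal hp' hp (sub_add_cancel _ _)
    _ = ENNReal.ofReal ((∫ u, w u ∂μ) ^ (1 - 1 / q) * (∫ u, w u * B u ∂μ) ^ (1 / q)) := by
        rw [← ofReal_integral_eq_lintegral_ofReal hw hw0,
          ← ofReal_integral_eq_lintegral_ofReal hwB hwB0, ENNReal.ofReal_rpow_of_nonneg hW hp',
          ENNReal.ofReal_rpow_of_nonneg hJ hp, ENNReal.ofReal_mul (by positivity)]

variable {a b x A B q : ℝ}

theorem norm_integral_left_peano_kernel_smul_le {g : ℝ → E} (hq : 1 ≤ q) (hab : a < b) (hax : a ≤ x)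
    (hg : ∀ u ∈ Ioo a x, ‖g u‖ ^ q ≤ (b - u) / (b - a) * A + (u - a) / (b - a) * B) :
    ‖∫ u in a..x, ((u - a) / (b - a)) • g u‖ ≤
      (b - a) * (1 / 2 : ℝ) ^ (1 - 1 / q) * (((x - a) / (b - a)) ^ (2 * (1 - 1 / q)) *
        (((x - a) ^ 2 * (3 * b - a - 2 * x)) / (6 * (b - a) ^ 3) * A +
          1 / 3 * ((x - a) / (b - a)) ^ 3 * B) ^ (1 / q)) := by
  have hD : 0 < b - a := sub_pos.2 hab
  have hkernel : ∀ u ∈ Ioo a x, 0 ≤ (u - a) / (b - a) := fun u hu ↦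
    div_nonneg (sub_nonneg.2 hu.1.le) hD.le
  have hchord : 0 ≤ ∫ u in a..x,
      (u - a) / (b - a) * ((b - u) / (b - a) * A + (u - a) / (b - a) * B) := by
    rw [integral_of_le hax, integral_Ioc_eq_integral_Ioo]
    exact setIntegral_nonneg measurableSet_Ioo fun u hu ↦
      mul_nonneg (hkernel u hu) ((by positivity : 0 ≤ ‖g u‖ ^ q).trans (hg u hu))
  rw [integral_left_peano_kernel_mul_chord x A B hab.ne] at hchord
  rw [← mul_rpow_one_sub_mul_mul_rpow _ hD (div_nonneg (sub_nonneg.2 hax) hD.le)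
      (nonneg_of_mul_nonneg_right hchord hD),
    ← integral_left_peano_kernel x hab.ne, ← integral_left_peano_kernel_mul_chord x A B hab.ne]
  simp only [integral_of_le hax, integral_Ioc_eq_integral_Ioo]
  refine norm_integral_smul_le_rpow_mul_rpow hq ?_ ?_
    (ae_restrict_of_forall_mem measurableSet_Ioo hkernel)
    (ae_restrict_of_forall_mem measurableSet_Ioo hg) <;>
  exact (Continuous.integrableOn_Icc (by fun_prop)).mono_set Ioo_subset_Icc_self

theorem norm_integral_right_peano_kernel_smul_le {g : ℝ → E} (hq : 1 ≤ q) (hab : a < b)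
    (hxb : x ≤ b)
    (hg : ∀ u ∈ Ioo x b, ‖g u‖ ^ q ≤ (b - u) / (b - a) * A + (u - a) / (b - a) * B) :
    ‖∫ u in x..b, ((u - b) / (b - a)) • g u‖ ≤
      (b - a) * (1 / 2 : ℝ) ^ (1 - 1 / q) * (((b - x) / (b - a)) ^ (2 * (1 - 1 / q)) *
        (1 / 3 * ((b - x) / (b - a)) ^ 3 * A +
          ((b - x) ^ 2 * (b - 3 * a + 2 * x)) / (6 * (b - a) ^ 3) * B) ^ (1 / q)) := by
  have hreflect : ∫ u in x..b, ((u - b) / (b - a)) • g u =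
      -∫ u in a..a + b - x, ((u - a) / (b - a)) • g (a + b - u) := by
    have hcomp := integral_comp_sub_left (a := a) (b := a + b - x)
      (fun u ↦ ((u - b) / (b - a)) • g u) (a + b)
    rw [sub_sub_cancel, add_sub_cancel_left] at hcomp
    rw [← hcomp, ← intervalIntegral.integral_neg]
    congr with u
    match_scalars
    ring
  have hreflected := norm_integral_left_peano_kernel_smul_le (g := fun u ↦ g (a + b - u))
    (x := a + b - x) (A := B) (B := A) hq hab (by linarith) fun u hu ↦
      (hg (a + b - u) ⟨by linarith [hu.2], by linarith [hu.1]⟩).trans_eq (by ring)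
  rw [hreflect, norm_neg]
  exact hreflected.trans_eq (by ring_nf)

variable [CompleteSpace E] {f f' : ℝ → E}

theorem integral_sub_div_smul_deriv {s r : ℝ} (c d : ℝ) (hsr : s ≤ r)
    (hf : ContinuousOn f (Icc s r)) (hf' : ∀ u ∈ Ioo s r, HasDerivAt f (f' u) u)
    (hint : IntervalIntegrable f' volume s r) :
    ∫ u in s..r, ((u - c) / d) • f' u =
      ((r - c) / d) • f r - ((s - c) / d) • f s - (1 / d) • ∫ u in s..r, f u := by
  rw [← intervalIntegral.integral_smul]
  refine integral_smul_deriv_eq_deriv_smul_of_hasDerivAt (u' := fun _ ↦ 1 / d) (by fun_prop) ?_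
    (fun u _ ↦ ((hasDerivAt_id' u).sub_const c).div_const d) ?_ intervalIntegrable_const hint
  · rwa [uIcc_of_le hsr]
  · rwa [min_eq_left hsr, max_eq_right hsr]

theorem sub_average_eq_integral_peano_kernel (hab : a < b) (hx : x ∈ Icc a b)
    (hf : ContinuousOn f (Icc a b)) (hf' : ∀ u ∈ Ioo a b, HasDerivAt f (f' u) u)
    (hint : IntervalIntegrable f' volume a b) :
    f x - (1 / (b - a)) • ∫ u in a..b, f u =
      (∫ u in a..x, ((u - a) / (b - a)) • f' u) + ∫ u in x..b, ((u - b) / (b - a)) • f' u := by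
  have hD : b - a ≠ 0 := (sub_pos.2 hab).ne'
  have hx' : x ∈ uIcc a b := Icc_subset_uIcc hx
  have hleft := integral_sub_div_smul_deriv a (b - a) hx.1 (hf.mono (Icc_subset_Icc_right hx.2))
    (fun u hu ↦ hf' u (Ioo_subset_Ioo_right hx.2 hu)) (hint.mono_set (uIcc_subset_uIcc_left hx'))
  have hright := integral_sub_div_smul_deriv b (b - a) hx.2 (hf.mono (Icc_subset_Icc_left hx.1))
    (fun u hu ↦ hf' u (Ioo_subset_Ioo_left hx.1 hu)) (hint.mono_set (uIcc_subset_uIcc_right hx'))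
  have hf_int : IntervalIntegrable f volume a b := hf.intervalIntegrable_of_Icc hab.le
  rw [hleft, hright, ← integral_add_adjacent_intervals
    (hf_int.mono_set (uIcc_subset_uIcc_left hx')) (hf_int.mono_set (uIcc_subset_uIcc_right hx'))]
  match_scalars <;> field_simp <;> ring

theorem stmt_11_general (hab : a < b) (hf : ContinuousOn f (Icc a b))
    (hf' : ∀ u ∈ Ioo a b, HasDerivAt f (f' u) u) (hint : IntervalIntegrable f' volume a b)
    (hq : 1 ≤ q)
    (hchord : ∀ u ∈ Ioo a b, ‖f' u‖ ^ q ≤ (b - u) / (b - a) * A + (u - a) / (b - a) * B)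
    (hx : x ∈ Icc a b) :
    ‖f x - (1 / (b - a)) • ∫ u in a..b, f u‖ ≤
      (b - a) * (1 / 2 : ℝ) ^ (1 - 1 / q) *
        (((b - x) / (b - a)) ^ (2 * (1 - 1 / q)) *
            (1 / 3 * ((b - x) / (b - a)) ^ 3 * A
              + ((b - x) ^ 2 * (b - 3 * a + 2 * x)) / (6 * (b - a) ^ 3) * B) ^ (1 / q)
          + ((x - a) / (b - a)) ^ (2 * (1 - 1 / q)) *
            ((1 / 6 + ((b - x) ^ 2 * (3 * a - b - 2 * x)) / (6 * (b - a) ^ 3)) * A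
              + 1 / 3 * ((x - a) / (b - a)) ^ 3 * B) ^ (1 / q)) := by
  have hleft := norm_integral_left_peano_kernel_smul_le hq hab hx.1
    fun u hu ↦ hchord u (Ioo_subset_Ioo_right hx.2 hu)
  have hright := norm_integral_right_peano_kernel_smul_le hq hab hx.2
    fun u hu ↦ hchord u (Ioo_subset_Ioo_left hx.1 hu)
  have hcoeff : 1 / 6 + ((b - x) ^ 2 * (3 * a - b - 2 * x)) / (6 * (b - a) ^ 3) =
      ((x - a) ^ 2 * (3 * b - a - 2 * x)) / (6 * (b - a) ^ 3) := by
    field_simp [(sub_pos.2 hab).ne']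
    ring
  rw [sub_average_eq_integral_peano_kernel hab hx hf hf' hint, hcoeff, mul_add,
    add_comm (_ * (_ * _))]
  exact norm_add_le_of_le hleft hright

end PeanoKernel

/-- Theorem 2.3: Ostrowski-type inequality via the power-mean inequality for `|f'|^q`
`m`-convex on `[0,∞)`, `q ∈ [1,∞)`. -/
theorem stmt_11 (f : ℝ → ℝ) (I : Set ℝ) (hIopen : IsOpen I) (hIconn : I.OrdConnected)
    (hIci : Set.Ici (0:ℝ) ⊆ I) (hf : ∀ y ∈ I, DifferentiableAt ℝ f y)
    (a b : ℝ) (ha : 0 ≤ a) (hab : a < b)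
    (hint : IntervalIntegrable (deriv f) volume a b)
    (q : ℝ) (hq : 1 ≤ q)
    (m : ℝ) (hm0 : 0 < m) (hm1 : m ≤ 1)
    (hmc : ∀ u ∈ Set.Ici (0:ℝ), ∀ v ∈ Set.Ici (0:ℝ), ∀ t ∈ Set.Icc (0:ℝ) 1,
      |deriv f (t * u + m * (1 - t) * v)| ^ q ≤
        t * |deriv f u| ^ q + m * (1 - t) * |deriv f v| ^ q)
    (x : ℝ) (hx : x ∈ Set.Icc a b) :
    |f x - (1 / (b - a)) * ∫ u in a..b, f u| ≤
      (b - a) * (1 / 2 : ℝ) ^ (1 - 1 / q) *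
        (((b - x) / (b - a)) ^ (2 * (1 - 1 / q)) *
            ((1 / 3) * ((b - x) / (b - a)) ^ 3 * |deriv f a| ^ q
              + m * ((b - x) ^ 2 * (b - 3 * a + 2 * x)) / (6 * (b - a) ^ 3) *
                  |deriv f (b / m)| ^ q) ^ (1 / q)
          + ((x - a) / (b - a)) ^ (2 * (1 - 1 / q)) *
            ((1 / 6 + ((b - x) ^ 2 * (3 * a - b - 2 * x)) / (6 * (b - a) ^ 3)) *
                  |deriv f a| ^ q
              + m * (1 / 3) * ((x - a) / (b - a)) ^ 3 *
                  |deriv f (b / m)| ^ q) ^ (1 / q)) := by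
  have hderiv : ∀ u ∈ Icc a b, HasDerivAt f (deriv f u) u := fun u hu ↦
    (hf u (hIci (ha.trans hu.1))).hasDerivAt
  have hconv : MConvexOn m (Ici 0) fun u ↦ |deriv f u| ^ q := hmc
  have hchord : ∀ u ∈ Icc a b, |deriv f u| ^ q ≤
      (b - u) / (b - a) * |deriv f a| ^ q + (u - a) / (b - a) * (m * |deriv f (b / m)| ^ q) :=
    fun _ ↦ hconv.le_chord hm0.ne' ha (div_nonneg (ha.trans hab.le) hm0.le) hab
  exact (stmt_11_general hab (HasDerivAt.continuousOn hderiv)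
    (fun u hu ↦ hderiv u (Ioo_subset_Icc_self hu)) hint hq
    (fun u hu ↦ hchord u (Ioo_subset_Icc_self hu)) hx).trans_eq (by ring_nf)
end
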